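/- Let φ, ψ ∈ W^{1,1}([−1,1];ℝ^{2×2}) with φ(−1) = ψ(−1) = A and φ(1) = ψ(1) = B, and let α > 0 be such that (φ,α) and (ψ,α) are admissible pairs whose phase separating points coincide: s_φ^α = s_ψ^α. Then there is a constant C_α > 0 such that |φ(s) − ψ(s)|² ≤ C_α(W(φ(s)) + W(ψ(s))) for every s ∈ [−1,1]. -/

import Mathlib

/-!
Write `A = wellA a` and `B = -A`. The potential `W₀` equals `min (|M - A|²) (|M - B|²)`, so at a
matrix which stays at distance `≥ α` from one well, `W` controls the squared distance to the
*other* well, with a constant depending on `α` (`dist_sq_le_of_far`). It therefore suffices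
that at every `s` the two curves avoid the `α`-ball around a common well
(`far_of_le_sSep`, `far_of_sSep_lt`): then `|φ - ψ|² ≤ 2 (|φ - X|² + |ψ - X|²)` with `X` the
other well.

The curves do so because an admissible curve never enters `B_α(A)` after having entered `B_α(B)`
(`Admissible.lt_of_mem_balls`). Otherwise it would run from `A` to near `B`, back to near `A`, and
finally to `B`; each of these three arcs costs about `d_W(A, B)` (`dW_le_arc` and the Lipschitz
bound), so its length would be at least `3 d_W(A, B) - 4 L α`, which contradicts
`8 L α < 3 d_W(A, B) - L_W(φ)`. Hence
`sup φ⁻¹(B_α(A)) ≤ s_φ^α ≤ inf φ⁻¹(B_α(B))`: before the phase separating point the curve is outside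
`B_α(B)`, after it outside `B_α(A)`, and that point is the same for both curves.
-/

noncomputable section

open MeasureTheory Set Filter

/-- The plane `ℝ²` with the Euclidean norm. -/
abbrev V2 : Type := EuclideanSpace ℝ (Fin 2)

/-- The space of `2 × 2` real matrices with the Frobenius (Euclidean) norm;
an element `M` has entries `M (i, j)` and columns `m_j = (M (·, j))`. -/
abbrev M2 : Type := EuclideanSpace ℝ (Fin 2 × Fin 2)

/-- The point `(s, t) ∈ ℝ²`. -/
def pt (s t : ℝ) : V2 := (WithLp.equiv 2 (Fin 2 → ℝ)).symm ![s, t]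

/-- The `j`-th column of a matrix. -/
def col (M : M2) (j : Fin 2) : V2 :=
  (WithLp.equiv 2 (Fin 2 → ℝ)).symm (fun i => M (i, j))

/-- The matrix with columns `v, w`. -/
def mkM (v w : V2) : M2 :=
  (WithLp.equiv 2 (Fin 2 × Fin 2 → ℝ)).symm (fun p => if p.2 = 1 then w p.1 else v p.1)

/-- The well `A = a ⊗ e₂ = (0, a)`. -/
def wellA (a : V2) : M2 := mkM 0 a

/-- The reference quadratic double-well potential
`W₀(M) = |m₁|² + min{|m₂ - a|², |m₂ + a|²}`. -/
def W0 (a : V2) (M : M2) : ℝ :=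
  ‖col M 0‖ ^ 2 + min (‖col M 1 - a‖ ^ 2) (‖col M 1 + a‖ ^ 2)

/-- The gradient `∇u(x)` of `u : ℝ² → ℝ²`, as a `2 × 2` matrix. -/
def grad (u : V2 → V2) (x : V2) : M2 :=
  (WithLp.equiv 2 (Fin 2 × Fin 2 → ℝ)).symm
    (fun p => fderiv ℝ u x (EuclideanSpace.single p.2 (1:ℝ)) p.1)

/-- The squared Frobenius norm `|∇²u(x)|²` of the second gradient of `u`. -/
def hess2 (u : V2 → V2) (x : V2) : ℝ :=
  ∑ i : Fin 2, ∑ j : Fin 2, ∑ k : Fin 2,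
    (fderiv ℝ (fun y => fderiv ℝ u y (EuclideanSpace.single k (1:ℝ)) i) x
      (EuclideanSpace.single j (1:ℝ))) ^ 2

/-- The singularly perturbed elastic energy `E_ε(u, Ω)`. -/
def En (W : M2 → ℝ) (ε : ℝ) (u : V2 → V2) (Ω : Set V2) : ℝ :=
  ∫ x in Ω, (ε⁻¹ * W (grad u x) + ε * hess2 u x)

/-- A model for membership in `H²(Ω; ℝ²)`: twice continuously differentiable together
with the relevant integrability properties on `Ω`. -/
def MemH2 (u : V2 → V2) (Ω : Set V2) : Prop :=
  ContDiff ℝ 2 u ∧ IntegrableOn (fun x => ‖u x‖) Ω ∧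
    IntegrableOn (fun x => ‖grad u x‖ ^ 2) Ω ∧ IntegrableOn (hess2 u) Ω

/-- The cylinder `ω_h = ω × (-h, h) ⊆ ℝ²`. -/
def cyl (ω : Set ℝ) (h : ℝ) : Set V2 := {x | x 0 ∈ ω ∧ x 1 ∈ Ioo (-h) h}

/-- The limiting deformation `u₀(x) = Ax` for `x₂ > 0`, `Bx` for `x₂ ≤ 0`. -/
def u0 (a : V2) (x : V2) : V2 := if 0 < x 1 then (x 1) • a else (-(x 1)) • a

/-- An admissible sequence for the optimal profile energy on `ω_h`. -/
def AdmSeq (W : M2 → ℝ) (a : V2) (h : ℝ) (ω : Set ℝ)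
    (u : ℕ → V2 → V2) (ε : ℕ → ℝ) : Prop :=
  (∀ n, 0 < ε n ∧ ε n < 1) ∧ Tendsto ε atTop (nhds 0) ∧
  (∀ n, MemH2 (u n) (cyl ω h)) ∧
  Tendsto (fun n => ∫ x in cyl ω h, ‖u n x - u0 a x‖) atTop (nhds 0)

/-- The optimal profile constant `K*` (computed over the cylinder `(-1/2,1/2) × (-h,h)`). -/
def Kstar (W : M2 → ℝ) (a : V2) (h : ℝ) : ℝ :=
  sInf {r | ∃ u ε, AdmSeq W a h (Ioo (-(1:ℝ)/2) (1/2)) u ε ∧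
    r = liminf (fun n => En W (ε n) (u n) (cyl (Ioo (-(1:ℝ)/2) (1/2)) h)) atTop}

/-- An optimal profile sequence with respect to `ω` (at height `h`): an admissible
sequence attaining `lim_n E_{ε_n}(u_n, ω_h) = H¹(ω)·K*`. -/
def IsOptProfile (W : M2 → ℝ) (a : V2) (h : ℝ) (ω : Set ℝ)
    (u : ℕ → V2 → V2) (ε : ℕ → ℝ) : Prop :=
  AdmSeq W a h ω u ε ∧
  Tendsto (fun n => En W (ε n) (u n) (cyl ω h)) atTop
    (nhds ((volume ω).toReal * Kstar W a h))

/-- The unit cube `Q = (-1/2, 1/2)²`. -/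
def Qset : Set V2 := cyl (Ioo (-(1:ℝ)/2) (1/2)) (1/2)

/-- The cell formula `K*_per` over gradients that are 1-periodic in `x₁` and agree
with `∇u₀` near the horizontal boundary of the unit cube `Q`. -/
def KstarPer (W : M2 → ℝ) (a : V2) : ℝ :=
  sInf {r | ∃ (L : ℝ) (u : V2 → V2), 0 < L ∧ MemH2 u Qset ∧
    (∀ x : V2, grad u (x + pt 1 0) = grad u x) ∧
    (∀ x ∈ Qset, 1/4 < |x 1| →
      grad u x = (if 0 < x 1 then wellA a else -(wellA a))) ∧
    r = ∫ x in Qset, (L * W (grad u x) + L⁻¹ * hess2 u x)}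

/-- A model of `W^{1,1}([-1,1]; ℝ^{2×2})` curves: `φ'` is a derivative of `φ` on `[-1,1]`
with integrable norm. -/
def IsCurve (φ φ' : ℝ → M2) : Prop :=
  (∀ s ∈ Icc (-1:ℝ) 1, HasDerivWithinAt φ (φ' s) (Icc (-1:ℝ) 1) s) ∧
  IntegrableOn (fun s => ‖φ' s‖) (Icc (-1:ℝ) 1)

/-- The length `L_W(φ) = 2∫ √(W(φ))|φ'| ds` of a curve on `[-1,1]`. -/
def LW (W : M2 → ℝ) (φ φ' : ℝ → M2) : ℝ :=
  2 * ∫ s in Icc (-1:ℝ) 1, Real.sqrt (W (φ s)) * ‖φ' s‖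

/-- The geodesic distance `d_W(M,N)` between two matrices. -/
def dW (W : M2 → ℝ) (M N : M2) : ℝ :=
  sInf {r | ∃ φ φ', IsCurve φ φ' ∧ φ (-1) = M ∧ φ 1 = N ∧ r = LW W φ φ'}

/-- `L` is a Lipschitz constant for `d_W` on `B_R(0) × B_R(0)`. -/
def IsLipOn (W : M2 → ℝ) (L R : ℝ) : Prop :=
  ∀ M₁ M₂ N₁ N₂ : M2, ‖M₁‖ < R → ‖M₂‖ < R → ‖N₁‖ < R → ‖N₂‖ < R →
    |dW W M₁ N₁ - dW W M₂ N₂| ≤ L * (‖M₁ - M₂‖ + ‖N₁ - N₂‖)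

/-- The one-dimensional transition energy `I_ε(φ)` of a curve on `ℝ`. -/
def Icurve (W : M2 → ℝ) (ε : ℝ) (φ φ' : ℝ → M2) : ℝ :=
  ∫ s : ℝ, (ε⁻¹ * W (φ s) + ε * ‖φ' s‖ ^ 2)

/-- The phase separating point of a curve on `[-1,1]` running from `M` to `N`:
`s_φ^α = (sup φ⁻¹(B_α(M)) + inf φ⁻¹(B_α(N)))/2`. -/
def sSep (φ : ℝ → M2) (M N : M2) (α : ℝ) : ℝ :=
  (sSup {s | s ∈ Icc (-1:ℝ) 1 ∧ ‖φ s - M‖ < α} +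
    sInf {s | s ∈ Icc (-1:ℝ) 1 ∧ ‖φ s - N‖ < α}) / 2

/-- The phase separating point of a curve on `ℝ` running from `M` (at `-∞`) to `N`
(at `+∞`): `(sup φ⁻¹(B_α(M)) + inf φ⁻¹(B_α(N)))/2`. -/
def sSepLine (φ : ℝ → M2) (M N : M2) (α : ℝ) : ℝ :=
  (sSup {s | ‖φ s - M‖ < α} + sInf {s | ‖φ s - N‖ < α}) / 2

/-- A pair `(φ, α)` is admissible (with respect to the Lipschitz constant `L` of `d_W`
on `B_R(0) × B_R(0)`, `R = 2 max{|M|, |N|}`): `φ` joins `M` to `N`, its length satisfies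
`L_W(φ) < 3 d_W(M,N)`, and `0 < α < γ(M,N,W,φ)`. -/
def Admissible (W : M2 → ℝ) (L : ℝ) (φ φ' : ℝ → M2) (M N : M2) (α : ℝ) : Prop :=
  IsCurve φ φ' ∧ φ (-1) = M ∧ φ 1 = N ∧ LW W φ φ' < 3 * dW W M N ∧
  0 < α ∧ α < min (‖M - N‖ / 2) ((3 * dW W M N - LW W φ φ') / (8 * L))

/-! ### Length of arcs -/

theorem LW_nonneg (W : M2 → ℝ) (φ φ' : ℝ → M2) : 0 ≤ LW W φ φ' :=
  mul_nonneg zero_le_two (integral_nonneg fun _ => by positivity)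

theorem dW_le_LW {W : M2 → ℝ} {φ φ' : ℝ → M2} (h : IsCurve φ φ') :
    dW W (φ (-1)) (φ 1) ≤ LW W φ φ' := by
  refine csInf_le ⟨0, ?_⟩ ⟨φ, φ', h, rfl, rfl, rfl⟩
  rintro r ⟨χ, χ', -, -, -, rfl⟩
  exact LW_nonneg W χ χ'

theorem LW_eq_intervalIntegral (W : M2 → ℝ) (φ φ' : ℝ → M2) :
    LW W φ φ' = 2 * ∫ s in (-1:ℝ)..1, Real.sqrt (W (φ s)) * ‖φ' s‖ := by
  rw [LW, intervalIntegral.integral_of_le (by norm_num), integral_Icc_eq_integral_Ioc]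

theorem IsCurve.continuousOn {φ φ' : ℝ → M2} (h : IsCurve φ φ') :
    ContinuousOn φ (Icc (-1:ℝ) 1) :=
  fun s hs => (h.1 s hs).continuousWithinAt

theorem IsCurve.intervalIntegrable {W : M2 → ℝ} (hWc : Continuous W) {φ φ' : ℝ → M2}
    (h : IsCurve φ φ') {p q : ℝ} (hp : p ∈ Icc (-1:ℝ) 1) (hq : q ∈ Icc (-1:ℝ) 1) :
    IntervalIntegrable (fun s => Real.sqrt (W (φ s)) * ‖φ' s‖) volume p q := by
  have hg : IntegrableOn (fun s => Real.sqrt (W (φ s)) * ‖φ' s‖) (Icc (-1:ℝ) 1) :=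
    IntegrableOn.continuousOn_mul
      ((Real.continuous_sqrt.comp hWc).comp_continuousOn h.continuousOn) h.2 isCompact_Icc
  exact (hg.mono_set (uIcc_subset_Icc hp hq)).intervalIntegrable

/-- Every arc of a curve on `[-1,1]`, traversed in either direction and reparametrized affinely to
`[-1,1]`, competes in the definition of `dW`. The absolute value covers both orders of `p` and
`q`. -/
theorem dW_le_arc {W : M2 → ℝ} {φ φ' : ℝ → M2} (h : IsCurve φ φ') {p q : ℝ}
    (hp : p ∈ Icc (-1:ℝ) 1) (hq : q ∈ Icc (-1:ℝ) 1) (hpq : p ≠ q) :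
    dW W (φ p) (φ q) ≤ 2 * |∫ s in p..q, Real.sqrt (W (φ s)) * ‖φ' s‖| := by
  obtain ⟨k, hk⟩ : ∃ k, k = (q - p) / 2 := ⟨_, rfl⟩
  obtain ⟨c, hc⟩ : ∃ c, c = (p + q) / 2 := ⟨_, rfl⟩
  have hk0 : k ≠ 0 := by
    rw [hk]; exact div_ne_zero (sub_ne_zero.mpr hpq.symm) two_ne_zero
  have hm : c + k * (-1) = p := by rw [hk, hc]; ring
  have hP : c + k * 1 = q := by rw [hk, hc]; ring
  have hmaps : MapsTo (fun s : ℝ => c + k * s) (Icc (-1:ℝ) 1) (Icc (-1:ℝ) 1) := by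
    rintro s ⟨hs1, hs2⟩
    obtain ⟨hp1, hp2⟩ := hp
    obtain ⟨hq1, hq2⟩ := hq
    have e : c + k * s = p * ((1 - s) / 2) + q * ((1 + s) / 2) := by rw [hk, hc]; ring
    constructor
    · change -1 ≤ c + k * s
      rw [e]; nlinarith
    · change c + k * s ≤ 1
      rw [e]; nlinarith
  have hcurve : IsCurve (fun s => φ (c + k * s)) (fun s => k • φ' (c + k * s)) := by
    constructor
    · intro s hs
      have hd : HasDerivWithinAt (fun s : ℝ => c + k * s) k (Icc (-1:ℝ) 1) s := by
        simpa using (((hasDerivAt_id s).const_mul k).const_add c).hasDerivWithinAt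
      exact HasDerivWithinAt.scomp s (h.1 _ (hmaps hs)) hd hmaps
    · have h1 : IntervalIntegrable (fun s => ‖φ' s‖) volume p q :=
        (h.2.mono_set (uIcc_subset_Icc hp hq)).intervalIntegrable
      have h2 := (h1.comp_add_left c).comp_mul_left (c := k)
      have e1 : (p - c) / k = -1 := by field_simp; linarith
      have e2 : (q - c) / k = 1 := by field_simp; linarith
      rw [e1, e2, intervalIntegrable_iff_integrableOn_Icc_of_le (by norm_num)] at h2
      have h3 := h2.const_mul ‖k‖
      simp only [← norm_smul] at h3
      exact h3
  have hle := dW_le_LW (W := W) hcurve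
  simp only [hm, hP] at hle
  refine hle.trans (le_of_eq ?_)
  rw [← abs_of_nonneg (LW_nonneg W _ _), LW_eq_intervalIntegral]
  have e : ∀ s, Real.sqrt (W (φ (c + k * s))) * ‖k • φ' (c + k * s)‖
      = |k| * (fun x => Real.sqrt (W (φ x)) * ‖φ' x‖) (c + k * s) := by
    intro s
    simp only [norm_smul, Real.norm_eq_abs]
    ring
  simp only [e, intervalIntegral.integral_const_mul]
  rw [intervalIntegral.integral_comp_add_mul (fun x => Real.sqrt (W (φ x)) * ‖φ' x‖) hk0, hm, hP,
    smul_eq_mul, abs_mul, abs_mul, abs_mul, abs_abs, abs_inv, abs_two, mul_inv_cancel_left₀ (abs_ne_zero.mpr hk0)]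

/-! ### Separation of the phases along an admissible curve -/

theorem norm_sub_neg_wellA (a : V2) : ‖wellA a - -(wellA a)‖ = 2 * ‖wellA a‖ := by
  rw [sub_neg_eq_add, ← two_smul ℝ (wellA a), norm_smul, Real.norm_two]

/-- An admissible curve does not visit the `α`-ball of `A` after that of `B = -A`. -/
theorem Admissible.lt_of_mem_balls {a : V2} {W : M2 → ℝ} (hWc : Continuous W) {L α : ℝ}
    (hL : 0 < L) (hLip : IsLipOn W L (2 * max ‖wellA a‖ ‖-(wellA a)‖)) {φ φ' : ℝ → M2}
    (h : Admissible W L φ φ' (wellA a) (-(wellA a)) α) {t u : ℝ}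
    (ht : t ∈ Icc (-1:ℝ) 1) (hu : u ∈ Icc (-1:ℝ) 1)
    (htA : ‖φ t - wellA a‖ < α) (huB : ‖φ u - -(wellA a)‖ < α) : t < u := by
  obtain ⟨hcurve, hφm, hφp, -, hα, hαγ⟩ := h
  obtain ⟨hα1, hα2⟩ := lt_min_iff.mp hαγ
  have hAB := norm_sub_neg_wellA a
  rw [norm_neg, max_self] at hLip
  generalize wellA a = A at *
  rw [hAB] at hα1
  have hsep : ∀ s, ‖φ s - A‖ < α → ‖φ s - -A‖ < α → False := by
    intro s h1 h2
    have h3 : ‖A - -A‖ ≤ ‖φ s - A‖ + ‖φ s - -A‖ := by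
      rw [norm_sub_rev (φ s) A]; exact norm_sub_le_norm_sub_add_norm_sub _ _ _
    linarith
  by_contra hlt
  have hut : u ≠ t := by
    rintro rfl; exact hsep _ htA huB
  have hut' : u < t := lt_of_le_of_ne (not_lt.mp hlt) hut
  have hu1 : -1 ≠ u := by
    rintro rfl; exact hsep _ (by simpa [hφm] using hα) huB
  have ht1 : t ≠ 1 := by
    rintro rfl; exact hsep _ htA (by simpa [hφp] using hα)
  have hm1 : (-1:ℝ) ∈ Icc (-1:ℝ) 1 := by norm_num
  have hp1 : (1:ℝ) ∈ Icc (-1:ℝ) 1 := by norm_num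
  have i1 := hcurve.intervalIntegrable hWc hm1 hu
  have i2 := hcurve.intervalIntegrable hWc hu ht
  have i3 := hcurve.intervalIntegrable hWc ht hp1
  have hlen := LW_eq_intervalIntegral W φ φ'
  rw [← intervalIntegral.integral_add_adjacent_intervals (i1.trans i2) i3,
    ← intervalIntegral.integral_add_adjacent_intervals i1 i2] at hlen
  have d1 := dW_le_arc (W := W) hcurve hm1 hu hu1
  -- The middle arc is traversed backwards, so that all three arcs run from near `A` to near `B`
  -- and the symmetry of `dW` is not needed.
  have d2 := dW_le_arc (W := W) hcurve ht hu hut.symm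
  have d3 := dW_le_arc (W := W) hcurve ht hp1 ht1
  rw [intervalIntegral.integral_symm, abs_neg] at d2
  have hpos : ∀ p q : ℝ, p ≤ q → 0 ≤ ∫ s in p..q, Real.sqrt (W (φ s)) * ‖φ' s‖ :=
    fun p q hpq => intervalIntegral.integral_nonneg hpq fun _ _ => by positivity
  rw [abs_of_nonneg (hpos _ _ hu.1), hφm] at d1
  rw [abs_of_nonneg (hpos _ _ hut'.le)] at d2
  rw [abs_of_nonneg (hpos _ _ ht.2), hφp] at d3
  have nA : ‖A‖ < 2 * ‖A‖ := by linarith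
  have nB : ‖-A‖ < 2 * ‖A‖ := by rwa [norm_neg]
  have nt : ‖φ t‖ < 2 * ‖A‖ := by
    have := norm_le_norm_add_norm_sub' (φ t) A
    linarith
  have nu : ‖φ u‖ < 2 * ‖A‖ := by
    have := norm_le_norm_add_norm_sub' (φ u) (-A)
    rw [norm_neg] at this
    linarith
  have l1 := (abs_le.mp (hLip A A (φ u) (-A) nA nA nu nB)).1
  have l2 := (abs_le.mp (hLip (φ t) A (φ u) (-A) nt nA nu nB)).1
  have l3 := (abs_le.mp (hLip (φ t) A (-A) (-A) nt nA nB nB)).1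
  rw [sub_self, norm_zero] at l1 l3
  have m1 := mul_lt_mul_of_pos_left huB hL
  have m2 := mul_lt_mul_of_pos_left htA hL
  rw [lt_div_iff₀ (by positivity)] at hα2
  have hLα := mul_pos hL hα
  nlinarith

theorem Admissible.sSup_le_sInf {a : V2} {W : M2 → ℝ} (hWc : Continuous W) {L α : ℝ}
    (hL : 0 < L) (hLip : IsLipOn W L (2 * max ‖wellA a‖ ‖-(wellA a)‖)) {φ φ' : ℝ → M2}
    (h : Admissible W L φ φ' (wellA a) (-(wellA a)) α) :
    sSup {s | s ∈ Icc (-1:ℝ) 1 ∧ ‖φ s - wellA a‖ < α} ≤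
      sInf {s | s ∈ Icc (-1:ℝ) 1 ∧ ‖φ s - -(wellA a)‖ < α} := by
  obtain ⟨-, hφm, hφp, -, hα, -⟩ := id h
  refine csSup_le ⟨-1, by norm_num, by simpa [hφm] using hα⟩ fun t ht => ?_
  refine le_csInf ⟨1, by norm_num, by simpa [hφp] using hα⟩ fun u hu => ?_
  exact (h.lt_of_mem_balls hWc hL hLip ht.1 hu.1 ht.2 hu.2).le

/-- Up to and including its phase separating point, an admissible curve stays outside `B_α(B)`.
The endpoint is included because `φ⁻¹(B_α(B))` is relatively open and does not contain `-1`. -/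
theorem Admissible.far_of_le_sSep {a : V2} {W : M2 → ℝ} (hWc : Continuous W) {L α : ℝ}
    (hL : 0 < L) (hLip : IsLipOn W L (2 * max ‖wellA a‖ ‖-(wellA a)‖)) {φ φ' : ℝ → M2}
    (h : Admissible W L φ φ' (wellA a) (-(wellA a)) α) {s : ℝ} (hs : s ∈ Icc (-1:ℝ) 1)
    (hsep : s ≤ sSep φ (wellA a) (-(wellA a)) α) : α ≤ ‖φ s - -(wellA a)‖ := by
  by_contra! hlt
  have hST := h.sSup_le_sInf hWc hL hLip
  obtain ⟨hcurve, hφm, -, -, hα, -⟩ := id h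
  -- `-1` lies in `φ⁻¹(B_α(A))`, hence before `s`.
  have hs1 : -1 < s := h.lt_of_mem_balls hWc hL hLip (by norm_num) hs (by simpa [hφm] using hα) hlt
  have hnear : ∀ᶠ r in nhdsWithin s (Icc (-1:ℝ) 1), ‖φ r - -(wellA a)‖ < α :=
    ((hcurve.continuousOn s hs).sub_const _).norm.eventually_lt continuousWithinAt_const hlt
  have hsub : Ioo (-1:ℝ) s ⊆ Icc (-1:ℝ) 1 := fun r hr => ⟨hr.1.le, hr.2.le.trans hs.2⟩
  have hnear' : ∀ᶠ r in nhdsWithin s (Iio s), ‖φ r - -(wellA a)‖ < α := by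
    rw [← nhdsWithin_Ioo_eq_nhdsLT hs1]
    exact hnear.filter_mono (nhdsWithin_mono _ hsub)
  obtain ⟨r, hr, hr'⟩ := (hnear'.and (Ioo_mem_nhdsLT hs1)).exists
  have hT : sInf {s | s ∈ Icc (-1:ℝ) 1 ∧ ‖φ s - -(wellA a)‖ < α} ≤ r :=
    csInf_le ⟨-1, fun x hx => hx.1.1⟩ ⟨hsub hr', hr⟩
  have := hr'.2
  unfold sSep at hsep
  linarith

/-- Strictly after its phase separating point, an admissible curve stays outside `B_α(A)`. -/
theorem Admissible.far_of_sSep_lt {a : V2} {W : M2 → ℝ} (hWc : Continuous W) {L α : ℝ}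
    (hL : 0 < L) (hLip : IsLipOn W L (2 * max ‖wellA a‖ ‖-(wellA a)‖)) {φ φ' : ℝ → M2}
    (h : Admissible W L φ φ' (wellA a) (-(wellA a)) α) {s : ℝ} (hs : s ∈ Icc (-1:ℝ) 1)
    (hsep : sSep φ (wellA a) (-(wellA a)) α < s) : α ≤ ‖φ s - wellA a‖ := by
  by_contra! hlt
  have hST := h.sSup_le_sInf hWc hL hLip
  have hS : s ≤ sSup {s | s ∈ Icc (-1:ℝ) 1 ∧ ‖φ s - wellA a‖ < α} :=
    le_csSup ⟨1, fun x hx => hx.1.2⟩ ⟨hs, hlt⟩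
  unfold sSep at hsep
  linarith

/-! ### The potential away from one well -/

theorem W0_eq_min (a : V2) (M : M2) :
    W0 a M = min (‖M - wellA a‖ ^ 2) (‖M - -(wellA a)‖ ^ 2) := by
  have h1 : ‖M - wellA a‖ ^ 2 = ‖col M 0‖ ^ 2 + ‖col M 1 - a‖ ^ 2 := by
    simp [EuclideanSpace.norm_sq_eq, Fintype.sum_prod_type, wellA, mkM, col]
    ring
  have h2 : ‖M - -(wellA a)‖ ^ 2 = ‖col M 0‖ ^ 2 + ‖col M 1 + a‖ ^ 2 := by
    simp [EuclideanSpace.norm_sq_eq, Fintype.sum_prod_type, wellA, mkM, col]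
    ring
  rw [h1, h2, min_add_add_left, W0]

/-- Away from the well `Y`, the distance to the other well `X` is comparable to the distance to
the nearest well: `|M - X| ≤ |M - Y| + |X - Y|` and `|X - Y| ≤ (|X - Y| / α) |M - Y|`. -/
theorem dist_sq_le_of_far {M X Y : M2} {α : ℝ} (hα : 0 < α) (hfar : α ≤ ‖M - Y‖) :
    ‖M - X‖ ^ 2 ≤ (1 + ‖X - Y‖ / α) ^ 2 * min (‖M - X‖ ^ 2) (‖M - Y‖ ^ 2) := by
  have hd : 0 ≤ ‖X - Y‖ / α := by positivity
  rcases min_choice (‖M - X‖ ^ 2) (‖M - Y‖ ^ 2) with h | h <;> rw [h]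
  · exact le_mul_of_one_le_left (sq_nonneg _) (one_le_pow₀ (by linarith))
  · rw [← mul_pow]
    refine pow_le_pow_left₀ (norm_nonneg _) ?_ 2
    have h1 : ‖M - X‖ ≤ ‖M - Y‖ + ‖X - Y‖ := by
      rw [norm_sub_rev X Y]; exact norm_sub_le_norm_sub_add_norm_sub _ _ _
    have h2 : ‖X - Y‖ = ‖X - Y‖ / α * α := by field_simp
    have h3 := mul_le_mul_of_nonneg_left hfar hd
    linarith

theorem norm_sub_sq_le (M N X : M2) : ‖M - N‖ ^ 2 ≤ 2 * (‖M - X‖ ^ 2 + ‖N - X‖ ^ 2) := by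
  have h : ‖M - N‖ ≤ ‖M - X‖ + ‖N - X‖ := by
    rw [norm_sub_rev N X]; exact norm_sub_le_norm_sub_add_norm_sub _ _ _
  have := pow_le_pow_left₀ (norm_nonneg _) h 2
  nlinarith [sq_nonneg (‖M - X‖ - ‖N - X‖)]

/-- If `(φ, α)` and `(ψ, α)` are admissible pairs joining `A` to `B` whose
phase separating points coincide, then `|φ(s) - ψ(s)|² ≤ C_α (W(φ(s)) + W(ψ(s)))`
for all `s ∈ [-1,1]`, with `C_α` depending only on `α` (and `W`). -/
theorem estimate_for_difference_of_admissible_curves (a : V2) (ha : a ≠ 0) (W : M2 → ℝ)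
    (hWnn : ∀ M, 0 ≤ W M) (hWc : Continuous W)
    (hwell : ∀ M, W M = 0 ↔ M = wellA a ∨ M = -(wellA a))
    (C : ℝ) (hC : 0 < C)
    (hgrowth : ∀ M, C⁻¹ * W0 a M ≤ W M ∧ W M ≤ C * W0 a M)
    (α : ℝ) (hα : 0 < α) :
    ∃ Cα > (0:ℝ), ∀ (φ φ' ψ ψ' : ℝ → M2) (L : ℝ), 0 < L →
      IsLipOn W L (2 * max ‖wellA a‖ ‖-(wellA a)‖) →
      Admissible W L φ φ' (wellA a) (-(wellA a)) α →
      Admissible W L ψ ψ' (wellA a) (-(wellA a)) α →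
      sSep φ (wellA a) (-(wellA a)) α = sSep ψ (wellA a) (-(wellA a)) α →
      ∀ s ∈ Icc (-1:ℝ) 1, ‖φ s - ψ s‖ ^ 2 ≤ Cα * (W (φ s) + W (ψ s)) := by
  have hK : 0 < 1 + ‖wellA a - -(wellA a)‖ / α := by positivity
  have hW0 : ∀ M, W0 a M ≤ C * W M := fun M => (inv_mul_le_iff₀ hC).mp (hgrowth M).1
  -- The distance to one well is controlled by `W` wherever the other well is at distance `≥ α`.
  have hA : ∀ M, α ≤ ‖M - -(wellA a)‖ →
      ‖M - wellA a‖ ^ 2 ≤ (1 + ‖wellA a - -(wellA a)‖ / α) ^ 2 * (C * W M) := by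
    intro M hM
    refine (dist_sq_le_of_far hα hM).trans ?_
    rw [← W0_eq_min]
    exact mul_le_mul_of_nonneg_left (hW0 M) (sq_nonneg _)
  have hB : ∀ M, α ≤ ‖M - wellA a‖ →
      ‖M - -(wellA a)‖ ^ 2 ≤ (1 + ‖wellA a - -(wellA a)‖ / α) ^ 2 * (C * W M) := by
    intro M hM
    refine (dist_sq_le_of_far hα hM).trans ?_
    rw [min_comm, ← W0_eq_min, norm_sub_rev (-(wellA a))]
    exact mul_le_mul_of_nonneg_left (hW0 M) (sq_nonneg _)
  refine ⟨2 * ((1 + ‖wellA a - -(wellA a)‖ / α) ^ 2 * C), by positivity, ?_⟩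
  intro φ φ' ψ ψ' L hL hLip hφ hψ hsep s hs
  rcases le_or_gt s (sSep φ (wellA a) (-(wellA a)) α) with hle | hgt
  · have h1 := hA _ (hφ.far_of_le_sSep hWc hL hLip hs hle)
    have h2 := hA _ (hψ.far_of_le_sSep hWc hL hLip hs (hsep ▸ hle))
    have h3 := norm_sub_sq_le (φ s) (ψ s) (wellA a)
    linarith
  · have h1 := hB _ (hφ.far_of_sSep_lt hWc hL hLip hs hgt)
    have h2 := hB _ (hψ.far_of_sSep_lt hWc hL hLip hs (hsep ▸ hgt))
    have h3 := norm_sub_sq_le (φ s) (ψ s) (-(wellA a))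
    linarith
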